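/- For the unit square grid (a = b = 1), the infimum L(N) of lengths of segments visiting at least N tiles satisfies: L(N) = 0 for N ∈ {1, 2}, and L(N) = √(⌈(N−3)²/2⌉) for every integer N ≥ 3. -/

import Mathlib

open Set

/-- Interior of the tile `T(k,l)` of the `a×b` grid. -/
noncomputable def tileInt (a b : ℝ) (k l : ℤ) : Set (ℝ × ℝ) :=
  Set.Ioo ((k : ℝ) * a) (((k : ℝ) + 1) * a) ×ˢ Set.Ioo ((l : ℝ) * b) (((l : ℝ) + 1) * b)

/-- Number of tiles of the `a×b` grid visited by the closed segment with endpoints `p`, `q`. -/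
noncomputable def visitCount (a b : ℝ) (p q : ℝ × ℝ) : ℕ :=
  Set.ncard {kl : ℤ × ℤ | (segment ℝ p q ∩ tileInt a b kl.1 kl.2).Nonempty}

/-- Normalized width of the discrete bounding rectangle of the segment with endpoints `p`, `q`. -/
noncomputable def normWidth (a : ℝ) (p q : ℝ × ℝ) : ℤ :=
  ⌈max p.1 q.1 / a⌉ - ⌊min p.1 q.1 / a⌋

/-- Normalized height of the discrete bounding rectangle of the segment with endpoints `p`, `q`. -/
noncomputable def normHeight (b : ℝ) (p q : ℝ × ℝ) : ℤ :=
  ⌈max p.2 q.2 / b⌉ - ⌊min p.2 q.2 / b⌋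

/-- Euclidean length of the segment with endpoints `p`, `q`. -/
noncomputable def segLen (p q : ℝ × ℝ) : ℝ :=
  Real.sqrt ((p.1 - q.1) ^ 2 + (p.2 - q.2) ^ 2)

/-- `maxTiles a b ℓ` : maximum number of tiles of the `a×b` grid visited by a segment of length `ℓ`. -/
noncomputable def maxTiles (a b ℓ : ℝ) : ℕ :=
  sSup {n : ℕ | ∃ p q : ℝ × ℝ, segLen p q = ℓ ∧ visitCount a b p q = n}

/-- `infLen a b N` : infimum of lengths of segments visiting at least `N` tiles of the `a×b` grid. -/
noncomputable def infLen (a b : ℝ) (N : ℕ) : ℝ :=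
  sInf {ℓ : ℝ | 0 < ℓ ∧ ∃ p q : ℝ × ℝ, segLen p q = ℓ ∧ N ≤ visitCount a b p q}

/-- `minIntLen N` : minimum positive integer length of a segment visiting at least `N` tiles
of the unit square grid. -/
noncomputable def minIntLen (N : ℕ) : ℕ :=
  sInf {L : ℕ | 1 ≤ L ∧ ∃ p q : ℝ × ℝ, segLen p q = (L : ℝ) ∧ N ≤ visitCount 1 1 p q}

lemma aux_mem_seg (p q r : ℝ × ℝ) (h : p.2 < q.2) (h1 : p.2 ≤ r.2) (h2 : r.2 ≤ q.2)
    (hl : (r.1 - p.1) * (q.2 - p.2) = (r.2 - p.2) * (q.1 - p.1)) : r ∈ segment ℝ p q := by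
  have hd : 0 < q.2 - p.2 := by linarith
  rw [segment_eq_image']
  refine ⟨(r.2 - p.2) / (q.2 - p.2), ⟨by apply div_nonneg <;> linarith, ?_⟩, ?_⟩
  · rw [div_le_one hd]; linarith
  · ext
    · simp only [Prod.fst_add, Prod.smul_fst, Prod.fst_sub, smul_eq_mul]
      rw [div_mul_eq_mul_div, ← hl]
      field_simp
      ring
    · simp only [Prod.snd_add, Prod.smul_snd, Prod.snd_sub, smul_eq_mul]
      field_simp
      ring

/-- The set of visited tiles. -/
def visSet (p q : ℝ × ℝ) : Set (ℤ × ℤ) :=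
  {kl : ℤ × ℤ | (segment ℝ p q ∩ tileInt 1 1 kl.1 kl.2).Nonempty}

lemma visSet_mem (p q : ℝ × ℝ) (k l : ℤ) : (k, l) ∈ visSet p q ↔
    ∃ t : ℝ, 0 ≤ t ∧ t ≤ 1 ∧ (k : ℝ) < p.1 + t * (q.1 - p.1) ∧ p.1 + t * (q.1 - p.1) < k + 1 ∧
      (l : ℝ) < p.2 + t * (q.2 - p.2) ∧ p.2 + t * (q.2 - p.2) < l + 1 := by
  simp only [visSet, tileInt, segment_eq_image', Set.mem_ofPred_eq, mul_one]
  constructor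
  · rintro ⟨x, ⟨t, ⟨h0, h1⟩, rfl⟩, ⟨h2, h3⟩, ⟨h4, h5⟩⟩
    exact ⟨t, h0, h1, by simpa using h2, by simpa using h3, by simpa using h4, by simpa using h5⟩
  · rintro ⟨t, h0, h1, h2, h3, h4, h5⟩
    exact ⟨_, ⟨t, ⟨h0, h1⟩, rfl⟩, ⟨by simpa using h2, by simpa using h3⟩,
      ⟨by simpa using h4, by simpa using h5⟩⟩

lemma aux_le (x d t t' : ℝ) (k k' : ℤ) (hd : 0 ≤ d) (ht : t ≤ t')
    (h1 : (k : ℝ) < x + t * d) (h2 : x + t' * d < k' + 1) : k ≤ k' := by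
  have : t * d ≤ t' * d := mul_le_mul_of_nonneg_right ht hd
  have h3 : (k : ℝ) < ((k' + 1 : ℤ) : ℝ) := by push_cast; linarith
  have := Int.cast_lt.mp h3
  omega

lemma aux_range (x y t : ℝ) (k : ℤ) (hd : x ≤ y) (h0 : 0 ≤ t) (h1 : t ≤ 1)
    (h2 : (k : ℝ) < x + t * (y - x)) (h3 : x + t * (y - x) < k + 1) : ⌊x⌋ ≤ k ∧ k < ⌈y⌉ := by
  have a : 0 ≤ t * (y - x) := mul_nonneg h0 (by linarith)
  have b : t * (y - x) ≤ y - x := mul_le_of_le_one_left (by linarith) h1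
  constructor
  · have : ⌊x⌋ < k + 1 := by
      rw [Int.floor_lt]; push_cast; linarith
    omega
  · rw [Int.lt_ceil]; linarith

lemma aux_inj (p q : ℝ × ℝ) (h1 : p.1 ≤ q.1) (h2 : p.2 ≤ q.2) :
    Set.InjOn (fun kl : ℤ × ℤ => kl.1 + kl.2) (visSet p q) := by
  rintro ⟨k, l⟩ h ⟨k', l'⟩ h' he
  obtain ⟨t, a0, a1, a2, a3, a4, a5⟩ := (visSet_mem _ _ _ _).1 h
  obtain ⟨t', b0, b1, b2, b3, b4, b5⟩ := (visSet_mem _ _ _ _).1 h'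
  simp only at he
  rw [Prod.mk.injEq]
  rcases le_total t t' with ht | ht
  · have := aux_le _ _ _ _ k k' (sub_nonneg.2 h1) ht a2 b3
    have := aux_le _ _ _ _ l l' (sub_nonneg.2 h2) ht a4 b5
    omega
  · have := aux_le _ _ _ _ k' k (sub_nonneg.2 h1) ht b2 a3
    have := aux_le _ _ _ _ l' l (sub_nonneg.2 h2) ht b4 a5
    omega

lemma aux_maps (p q : ℝ × ℝ) (h1 : p.1 ≤ q.1) (h2 : p.2 ≤ q.2) :
    Set.MapsTo (fun kl : ℤ × ℤ => kl.1 + kl.2) (visSet p q)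
      (Finset.Icc (⌊p.1⌋ + ⌊p.2⌋) (⌈q.1⌉ + ⌈q.2⌉ - 2) : Finset ℤ) := by
  rintro ⟨k, l⟩ h
  obtain ⟨t, a0, a1, a2, a3, a4, a5⟩ := (visSet_mem _ _ _ _).1 h
  have := aux_range _ _ _ _ h1 a0 a1 a2 a3
  have := aux_range _ _ _ _ h2 a0 a1 a4 a5
  simp only [Finset.coe_Icc, Set.mem_Icc]
  omega

lemma aux_inj' (p q : ℝ × ℝ) (h1 : p.1 ≤ q.1) (h2 : q.2 ≤ p.2) :
    Set.InjOn (fun kl : ℤ × ℤ => kl.1 - kl.2) (visSet p q) := by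
  rintro ⟨k, l⟩ h ⟨k', l'⟩ h' he
  obtain ⟨t, a0, a1, a2, a3, a4, a5⟩ := (visSet_mem _ _ _ _).1 h
  obtain ⟨t', b0, b1, b2, b3, b4, b5⟩ := (visSet_mem _ _ _ _).1 h'
  simp only at he
  rw [Prod.mk.injEq]
  have e : ∀ t : ℝ, p.2 + t * (q.2 - p.2) = q.2 + (1 - t) * (p.2 - q.2) := fun t => by ring
  rw [e] at a4 a5 b4 b5
  rcases le_total t t' with ht | ht
  · have := aux_le _ _ _ _ k k' (sub_nonneg.2 h1) ht a2 b3
    have := aux_le _ _ (1 - t') (1 - t) l' l (sub_nonneg.2 h2) (by linarith) b4 a5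
    omega
  · have := aux_le _ _ _ _ k' k (sub_nonneg.2 h1) ht b2 a3
    have := aux_le _ _ (1 - t) (1 - t') l l' (sub_nonneg.2 h2) (by linarith) a4 b5
    omega

lemma aux_maps' (p q : ℝ × ℝ) (h1 : p.1 ≤ q.1) (h2 : q.2 ≤ p.2) :
    Set.MapsTo (fun kl : ℤ × ℤ => kl.1 - kl.2) (visSet p q)
      (Finset.Icc (⌊p.1⌋ - ⌈p.2⌉ + 1) (⌈q.1⌉ - 1 - ⌊q.2⌋) : Finset ℤ) := by
  rintro ⟨k, l⟩ h
  obtain ⟨t, a0, a1, a2, a3, a4, a5⟩ := (visSet_mem _ _ _ _).1 h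
  have e : ∀ t : ℝ, p.2 + t * (q.2 - p.2) = q.2 + (1 - t) * (p.2 - q.2) := fun t => by ring
  rw [e] at a4 a5
  have := aux_range _ _ _ _ h1 a0 a1 a2 a3
  have := aux_range _ _ (1 - t) _ h2 (by linarith) (by linarith) a4 a5
  simp only [Finset.coe_Icc, Set.mem_Icc]
  omega

lemma aux_ceil_sub (x y : ℝ) (h : x ≤ y) :
    (((max (⌈y⌉ - ⌊x⌋ - 2) 0 : ℤ)) : ℝ) ≤ y - x := by
  have a := Int.ceil_lt_add_one y
  have b := Int.sub_one_lt_floor x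
  push_cast
  apply max_le <;> linarith

lemma aux_lower1 (p q : ℝ × ℝ) (N : ℕ) (hN : 3 ≤ N) (h1 : p.1 ≤ q.1) (h : N ≤ visitCount 1 1 p q) :
    ∃ A B : ℤ, 0 ≤ A ∧ 0 ≤ B ∧ (N : ℤ) - 3 ≤ A + B ∧ (A : ℝ) ≤ |p.1 - q.1| ∧
      (B : ℝ) ≤ |p.2 - q.2| := by
  change N ≤ (visSet p q).ncard at h
  rcases le_total p.2 q.2 with h2 | h2
  · have := Set.ncard_le_ncard_of_injOn _ (aux_maps p q h1 h2) (aux_inj p q h1 h2)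
      (Finset.finite_toSet _)
    rw [Set.ncard_coe_finset, Int.card_Icc] at this
    refine ⟨max (⌈q.1⌉ - ⌊p.1⌋ - 2) 0, max (⌈q.2⌉ - ⌊p.2⌋ - 2) 0, le_max_right _ _,
      le_max_right _ _, ?_, ?_, ?_⟩
    rotate_left
    · rw [abs_sub_comm, abs_of_nonneg (sub_nonneg.2 h1)]; exact aux_ceil_sub _ _ h1
    · rw [abs_sub_comm, abs_of_nonneg (sub_nonneg.2 h2)]; exact aux_ceil_sub _ _ h2
    · omega
  · have := Set.ncard_le_ncard_of_injOn _ (aux_maps' p q h1 h2) (aux_inj' p q h1 h2)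
      (Finset.finite_toSet _)
    rw [Set.ncard_coe_finset, Int.card_Icc] at this
    refine ⟨max (⌈q.1⌉ - ⌊p.1⌋ - 2) 0, max (⌈p.2⌉ - ⌊q.2⌋ - 2) 0, le_max_right _ _,
      le_max_right _ _, ?_, ?_, ?_⟩
    rotate_left
    · rw [abs_sub_comm, abs_of_nonneg (sub_nonneg.2 h1)]; exact aux_ceil_sub _ _ h1
    · rw [abs_of_nonneg (sub_nonneg.2 h2)]; exact aux_ceil_sub _ _ h2
    · omega

lemma aux_lower2 (p q : ℝ × ℝ) (N : ℕ) (hN : 3 ≤ N) (h : N ≤ visitCount 1 1 p q) :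
    ∃ A B : ℤ, 0 ≤ A ∧ 0 ≤ B ∧ (N : ℤ) - 3 ≤ A + B ∧ (A : ℝ) ≤ |p.1 - q.1| ∧
      (B : ℝ) ≤ |p.2 - q.2| := by
  rcases le_total p.1 q.1 with h1 | h1
  · exact aux_lower1 p q N hN h1 h
  · have := aux_lower1 q p N hN h1 (by simpa only [visitCount, segment_symm ℝ q p] using h)
    simpa only [abs_sub_comm] using this

lemma aux_lower (p q : ℝ × ℝ) (N : ℕ) (hN : 3 ≤ N) (h : N ≤ visitCount 1 1 p q) :
    Real.sqrt ((⌈((N : ℝ) - 3) ^ 2 / 2⌉ : ℤ) : ℝ) ≤ segLen p q := by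
  obtain ⟨A, B, hA, hB, hAB, ha, hb⟩ := aux_lower2 p q N hN h
  apply Real.sqrt_le_sqrt
  have hA' : (0 : ℝ) ≤ A := by exact_mod_cast hA
  have hB' : (0 : ℝ) ≤ B := by exact_mod_cast hB
  have hAB' : (N : ℝ) - 3 ≤ A + B := by exact_mod_cast hAB
  have hN' : (3 : ℝ) ≤ N := by exact_mod_cast hN
  have h1 : ⌈((N : ℝ) - 3) ^ 2 / 2⌉ ≤ A ^ 2 + B ^ 2 := by
    rw [Int.ceil_le]; push_cast
    have : ((N : ℝ) - 3) ^ 2 ≤ (A + B) ^ 2 := pow_le_pow_left₀ (by linarith) hAB' 2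
    nlinarith [sq_nonneg ((A : ℝ) - B)]
  have h2 : ((⌈((N : ℝ) - 3) ^ 2 / 2⌉ : ℤ) : ℝ) ≤ A ^ 2 + B ^ 2 := by exact_mod_cast h1
  have h3 := pow_le_pow_left₀ hA' ha 2
  have h4 := pow_le_pow_left₀ hB' hb 2
  rw [sq_abs] at h3 h4
  linarith

lemma aux_count (p q : ℝ × ℝ) (h1 : p.1 ≤ q.1) (h2 : p.2 ≤ q.2) (N : ℕ)
    (h : ∀ j : ℤ, 0 ≤ j → j < N → ∃ k l : ℤ, k + l = j - 2 ∧ (k, l) ∈ visSet p q) :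
    N ≤ visitCount 1 1 p q := by
  change N ≤ (visSet p q).ncard
  have hfin : (visSet p q).Finite :=
    Set.Finite.of_injOn (aux_maps p q h1 h2) (aux_inj p q h1 h2) (Finset.finite_toSet _)
  have hs : ((Finset.Ico (-2 : ℤ) (N - 2) : Finset ℤ) : Set ℤ) ⊆
      (fun kl : ℤ × ℤ => kl.1 + kl.2) '' (visSet p q) := by
    intro j hj
    simp only [Finset.coe_Ico, Set.mem_Ico] at hj
    obtain ⟨k, l, hkl, hm⟩ := h (j + 2) (by omega) (by omega)
    exact ⟨(k, l), hm, by simp only; omega⟩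
  have h3 := Set.ncard_le_ncard hs (hfin.image _)
  have h4 := Set.ncard_image_le (f := fun kl : ℤ × ℤ => kl.1 + kl.2) hfin
  rw [Set.ncard_coe_finset, Int.card_Ico] at h3
  omega

lemma aux_visit (p q : ℝ × ℝ) (h : p.2 < q.2) (k l : ℤ) (x y : ℝ) (h1 : p.2 ≤ y) (h2 : y ≤ q.2)
    (hl : (x - p.1) * (q.2 - p.2) = (y - p.2) * (q.1 - p.1))
    (a1 : k < x) (a2 : x < k + 1) (b1 : l < y) (b2 : y < l + 1) : (k, l) ∈ visSet p q := by
  refine ⟨(x, y), aux_mem_seg _ _ _ h h1 h2 hl, ?_⟩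
  simp only [tileInt, mul_one]
  exact ⟨⟨a1, a2⟩, ⟨b1, b2⟩⟩

lemma aux_even (m : ℕ) (d : ℝ) (hd : 0 < d) (hd' : d < 1 / 4) :
    2 * m + 3 ≤ visitCount 1 1 (-2 * d, -d) ((m : ℝ) + d, (m : ℝ) + 2 * d) := by
  have hm : (0 : ℝ) ≤ m := Nat.cast_nonneg m
  apply aux_count
  · simp only; linarith
  · simp only; linarith
  intro j hj0 hj1
  rcases Int.even_or_odd' j with ⟨i, rfl | rfl⟩
  · refine ⟨i - 1, i - 1, by ring, ?_⟩
    have hi : 0 ≤ i := by omega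
    have hi' : i ≤ m + 1 := by push_cast at hj1; omega
    rcases eq_or_lt_of_le hi with rfl | hi
    · apply aux_visit _ _ (by simp only; linarith) _ _ (-2 * d) (-d) <;>
        (try simp only) <;> (try push_cast) <;> first | linarith | ring
    rcases eq_or_lt_of_le hi' with rfl | hi'
    · apply aux_visit _ _ (by simp only; linarith) _ _ (m + d) (m + 2 * d) <;>
        (try simp only) <;> (try push_cast) <;> first | linarith | ring
    have r1 : (1 : ℝ) ≤ i := by exact_mod_cast hi
    have r2 : (i : ℝ) ≤ m := by exact_mod_cast (by omega : i ≤ m)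
    apply aux_visit _ _ (by simp only; linarith) _ _ (i - 1 / 2) (i - 1 / 2 + d) <;>
        (try simp only) <;> (try push_cast) <;> first | linarith | ring
  · refine ⟨i - 1, i, by ring, ?_⟩
    have r1 : (0 : ℝ) ≤ i := by exact_mod_cast (by omega : 0 ≤ i)
    have r2 : (i : ℝ) ≤ m := by exact_mod_cast (by push_cast at hj1; omega : i ≤ m)
    apply aux_visit _ _ (by simp only; linarith) _ _ (i - d / 2) (i + d / 2) <;>
        (try simp only) <;> (try push_cast) <;> first | linarith | ring

lemma aux_odd (m : ℕ) (d μ : ℝ) (hd : 0 < d) (hd' : d * (2 * (m + 1)) < 1)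
    (hμ : μ * (m + 1 + d) = m + d) :
    0 < μ ∧ μ < 1 ∧
    2 * m + 4 ≤ visitCount 1 1 (-(μ * (d / 2)), -(3 * d / 2))
      (μ * (m + 1 + 3 * d / 2), (m : ℝ) + 1 + d / 2) := by
  have hm : (0 : ℝ) ≤ m := Nat.cast_nonneg m
  have hμ0 : 0 < μ := by
    by_contra! hc
    nlinarith
  have hμ1 : μ < 1 := by
    by_contra! hc
    nlinarith
  have hmd : 0 ≤ m * d := by positivity
  have hd2 : d < 1 / 2 := by nlinarith
  have hμd : μ * d < d := by nlinarith
  have hμd0 : 0 < μ * d := by positivity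
  -- the line has the equation `x = μ * (y + d)`
  have key : ∀ (k l : ℤ) (y : ℝ), -(3 * d / 2) ≤ y → y ≤ (m : ℝ) + 1 + d / 2 →
      k < μ * (y + d) → μ * (y + d) < k + 1 → l < y → y < l + 1 → (k, l) ∈
      visSet (-(μ * (d / 2)), -(3 * d / 2)) (μ * (m + 1 + 3 * d / 2), (m : ℝ) + 1 + d / 2) := by
    intro k l y h1 h2 h3 h4 h5 h6
    apply aux_visit _ _ (by simp only; linarith) _ _ (μ * (y + d)) y h1 h2 _ h3 h4 h5 h6
    simp only; ring
  refine ⟨hμ0, hμ1, ?_⟩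
  apply aux_count
  · simp only; nlinarith
  · simp only; linarith
  -- values of `1 - μ`
  have h1μ : (1 - μ) * (m + 1 + d) = 1 := by linarith
  have lowb : ∀ i : ℝ, 0 ≤ i → i ≤ m → i + d ≤ μ * (i + 1 + d) := by
    intro i hi hi'
    have : (1 - μ) * (i + 1 + d) ≤ 1 := by nlinarith
    linarith
  have upb : ∀ i : ℝ, 0 ≤ i → i ≤ m → μ * (i + 1 + 3 * d / 2) < i + 1 := by
    intro i hi hi'
    have h1 : μ * i ≤ i := by nlinarith
    have h2 : μ * (1 + 3 * d / 2) < 1 := by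
      by_contra! hc
      have : (m + 1 + d) ≤ (m + d) * (1 + 3 * d / 2) := by
        rw [← hμ]
        nlinarith
      nlinarith
    linarith
  intro j hj0 hj1
  rcases Int.even_or_odd' j with ⟨i, rfl | rfl⟩
  · refine ⟨i - 1, i - 1, by ring, ?_⟩
    have hi : 0 ≤ i := by omega
    rcases eq_or_lt_of_le hi with rfl | hi
    · apply key _ _ (-(3 * d / 2)) <;> push_cast <;> linarith
    have r1 : (1 : ℝ) ≤ i := by exact_mod_cast hi
    have r2 : (i : ℝ) ≤ m + 1 := by exact_mod_cast (by push_cast at hj1; omega : i ≤ m + 1)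
    have l1 := lowb (i - 1) (by linarith) (by linarith)
    have l2 := upb (i - 1) (by linarith) (by linarith)
    apply key _ _ (i - d / 2) <;> push_cast <;> linarith
  · have hi : 0 ≤ i := by omega
    rcases eq_or_lt_of_le hi with rfl | hi
    · refine ⟨0, -1, by ring, ?_⟩
      apply key _ _ (-(d / 2)) <;> push_cast <;> linarith
    refine ⟨i - 1, i, by ring, ?_⟩
    have r1 : (1 : ℝ) ≤ i := by exact_mod_cast hi
    have r2 : (i : ℝ) ≤ m + 1 := by exact_mod_cast (by push_cast at hj1; omega : i ≤ m + 1)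
    have l1 := lowb (i - 1) (by linarith) (by linarith)
    have l2 := upb (i - 1) (by linarith) (by linarith)
    apply key _ _ (i + d / 2) <;> push_cast <;> linarith

lemma aux_len (w h e : ℝ) (hw : 0 ≤ w) (hh : 0 ≤ h) (p q : ℝ × ℝ) (he : 0 ≤ e)
    (h1 : p.1 ≤ q.1) (h2 : p.2 ≤ q.2) (h3 : q.1 - p.1 ≤ w + e) (h4 : q.2 - p.2 ≤ h + e) :
    segLen p q ≤ Real.sqrt (w ^ 2 + h ^ 2) + 2 * e := by
  have s0 := Real.sqrt_nonneg (w ^ 2 + h ^ 2)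
  have s2 := Real.sq_sqrt (by positivity : 0 ≤ w ^ 2 + h ^ 2)
  have sw : w ≤ Real.sqrt (w ^ 2 + h ^ 2) := Real.le_sqrt_of_sq_le (by nlinarith)
  have sh : h ≤ Real.sqrt (w ^ 2 + h ^ 2) := Real.le_sqrt_of_sq_le (by nlinarith)
  unfold segLen
  apply Real.sqrt_le_iff.2 ⟨by linarith, ?_⟩
  have a1 := pow_le_pow_left₀ (sub_nonneg.2 h1) h3 2
  have a2 := pow_le_pow_left₀ (sub_nonneg.2 h2) h4 2
  nlinarith [mul_le_mul_of_nonneg_right sw he, mul_le_mul_of_nonneg_right sh he]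

lemma aux_upper (N : ℕ) (hN : 3 ≤ N) (e : ℝ) (he : 0 < e) :
    ∃ p q : ℝ × ℝ, 0 < segLen p q ∧ N ≤ visitCount 1 1 p q ∧
      segLen p q ≤ Real.sqrt ((⌈((N : ℝ) - 3) ^ 2 / 2⌉ : ℤ) : ℝ) + e := by
  have hpos : ∀ p q : ℝ × ℝ, p.2 < q.2 → 0 < segLen p q := by
    intro p q h
    apply Real.sqrt_pos.2
    have : 0 < (p.2 - q.2) ^ 2 := by
      apply sq_pos_of_neg; linarith
    positivity
  obtain ⟨m, rfl | rfl⟩ : ∃ m, N = 2 * m + 3 ∨ N = 2 * m + 4 := ⟨(N - 3) / 2, by omega⟩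
  · have hm : (0 : ℝ) ≤ m := Nat.cast_nonneg m
    set d := min (e / 6) (1 / 5) with hdd
    have hd : 0 < d := by positivity
    have d1 : d ≤ e / 6 := min_le_left _ _
    have d2 : d ≤ 1 / 5 := min_le_right _ _
    refine ⟨(-2 * d, -d), (m + d, m + 2 * d), hpos _ _ (by simp only; linarith),
      aux_even m d hd (by linarith), ?_⟩
    have := aux_len m m (3 * d) hm hm (-2 * d, -d) (m + d, m + 2 * d) (by linarith)
      (by simp only; linarith) (by simp only; linarith) (by simp only; linarith)
      (by simp only; linarith)
    have hc : ((m ^ 2 + m ^ 2 : ℤ)) ≤ ⌈(((2 * m + 3 : ℕ) : ℝ) - 3) ^ 2 / 2⌉ := by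
      apply Int.le_of_sub_one_lt
      rw [Int.lt_ceil]; push_cast; nlinarith
    have hc' : (m : ℝ) ^ 2 + (m : ℝ) ^ 2 ≤ ((⌈(((2 * m + 3 : ℕ) : ℝ) - 3) ^ 2 / 2⌉ : ℤ) : ℝ) := by
      exact_mod_cast hc
    have := Real.sqrt_le_sqrt hc'
    linarith
  · have hm : (0 : ℝ) ≤ m := Nat.cast_nonneg m
    set d := min (e / 6) (1 / (4 * (m + 1))) with hdd
    have hd : 0 < d := by positivity
    have d1 : d ≤ e / 6 := min_le_left _ _
    have d2 : d ≤ 1 / (4 * (m + 1)) := min_le_right _ _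
    rw [le_div_iff₀ (by positivity)] at d2
    have hμ : (m + d) / (m + 1 + d) * (m + 1 + d) = m + d := by
      field_simp
    generalize (m + d) / (m + 1 + d) = μ at hμ
    obtain ⟨h0, h1, h2⟩ := aux_odd m d μ hd (by linarith) hμ
    have hb : μ * d ≤ d := by nlinarith
    have hb0 : 0 < μ * d := by positivity
    refine ⟨_, _, hpos _ _ (by simp only; linarith), h2, ?_⟩
    have := aux_len m (m + 1) (2 * d) hm (by linarith) (-(μ * (d / 2)), -(3 * d / 2))
      (μ * (m + 1 + 3 * d / 2), (m : ℝ) + 1 + d / 2) (by linarith)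
      (by simp only; linarith) (by simp only; linarith) (by simp only; linarith)
      (by simp only; linarith)
    have hc : ((m ^ 2 + (m + 1) ^ 2 : ℤ)) ≤ ⌈(((2 * m + 4 : ℕ) : ℝ) - 3) ^ 2 / 2⌉ := by
      apply Int.le_of_sub_one_lt
      rw [Int.lt_ceil]; push_cast; nlinarith
    have hc' : (m : ℝ) ^ 2 + ((m : ℝ) + 1) ^ 2 ≤
        ((⌈(((2 * m + 4 : ℕ) : ℝ) - 3) ^ 2 / 2⌉ : ℤ) : ℝ) := by
      exact_mod_cast hc
    have := Real.sqrt_le_sqrt hc'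
    linarith

lemma aux_bdd (N : ℕ) : BddBelow {ℓ : ℝ | 0 < ℓ ∧ ∃ p q : ℝ × ℝ, segLen p q = ℓ ∧
    N ≤ visitCount 1 1 p q} := ⟨0, fun _ h => h.1.le⟩

lemma aux_inf_le (M N : ℕ) (hN : 3 ≤ N) (hM : M ≤ N) :
    infLen 1 1 M ≤ Real.sqrt ((⌈((N : ℝ) - 3) ^ 2 / 2⌉ : ℤ) : ℝ) := by
  apply le_of_forall_pos_le_add
  intro e he
  obtain ⟨p, q, h0, h1, h2⟩ := aux_upper N hN e he
  exact (csInf_le (aux_bdd M) ⟨h0, p, q, rfl, hM.trans h1⟩).trans h2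

lemma aux_small (M : ℕ) (hM : M ≤ 3) : infLen 1 1 M = 0 := by
  apply le_antisymm
  · have := aux_inf_le M 3 le_rfl hM
    simpa using this
  · exact Real.sInf_nonneg fun _ h => h.1.le

theorem stmt_11 :
    infLen 1 1 1 = 0 ∧ infLen 1 1 2 = 0 ∧
    ∀ N : ℕ, 3 ≤ N →
      infLen 1 1 N = Real.sqrt ((⌈((N : ℝ) - 3) ^ 2 / 2⌉ : ℤ) : ℝ) := by
  refine ⟨aux_small 1 (by norm_num), aux_small 2 (by norm_num), fun N hN => ?_⟩
  apply le_antisymm (aux_inf_le N N hN le_rfl)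
  apply le_csInf
  · obtain ⟨p, q, h0, h1, _⟩ := aux_upper N hN 1 one_pos
    exact ⟨_, h0, p, q, rfl, h1⟩
  · rintro _ ⟨_, p, q, rfl, h⟩
    exact aux_lower p q N hN h
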